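/- Let D be a finite universal distance set consisting of a single block together with 0. Then the countable Urysohn space M with distance set D is indivisible: for every colouring χ : M → {0,1} there exist i ∈ {0,1} and a subspace of M isometric to M on which χ is constantly i. -/

import Mathlib

namespace Sauer

def IsMetricTriple (a b c : ℝ) : Prop := a ≤ b + c ∧ b ≤ a + c ∧ c ≤ a + b

def IsUniversalDist (D : Set ℝ) : Prop :=
  D.Finite ∧ (0 : ℝ) ∈ D ∧ (∀ d ∈ D, 0 ≤ d) ∧
    ∀ s x₀ y₀ x₁ y₁ : ℝ, s ∈ D → x₀ ∈ D → y₀ ∈ D → x₁ ∈ D → y₁ ∈ D →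
      0 < x₀ → 0 < y₀ → 0 < x₁ → 0 < y₁ →
      IsMetricTriple x₀ y₀ s → IsMetricTriple x₁ y₁ s →
      ∃ t ∈ D, 0 < t ∧ IsMetricTriple x₀ x₁ t ∧ IsMetricTriple y₀ y₁ t

open Classical in
noncomputable def dsucc (D : Set ℝ) (r : ℝ) : ℝ :=
  if ({s | s ∈ D ∧ r < s}).Nonempty then sInf {s | s ∈ D ∧ r < s} else r

noncomputable def dpred (D : Set ℝ) (r : ℝ) : ℝ := sSup {s | s ∈ D ∧ s < r}

def IsBlock (D B : Set ℝ) : Prop :=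
  ∃ (n : ℕ) (b : ℕ → ℝ),
    B = {x | ∃ i, i ≤ n ∧ x = b i} ∧
    (∀ i ≤ n, b i ∈ D) ∧ 0 < b 0 ∧
    (∀ i < n, b i < b (i + 1)) ∧
    (∀ y ∈ D, y < b 0 → 2 * y < b 0) ∧
    (∀ i < n, b (i + 1) = dsucc D (b i)) ∧
    (∀ i < n, b (i + 1) ≤ b i + b 0)

def IsJump (D : Set ℝ) (r : ℝ) : Prop := r ∈ D ∧ ∀ s ∈ D, r < s → 2 * r < s

structure Katetov (D : Set ℝ) (M : Type) [MetricSpace M] where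
  dom : Finset M
  f : M → ℝ
  mem : ∀ x ∈ dom, f x ∈ D
  pos : ∀ x ∈ dom, 0 < f x
  ineq1 : ∀ x ∈ dom, ∀ y ∈ dom, |f x - f y| ≤ dist x y
  ineq2 : ∀ x ∈ dom, ∀ y ∈ dom, dist x y ≤ f x + f y

variable {D : Set ℝ} {M : Type} [MetricSpace M]

def orb (t : Katetov D M) : Set M :=
  {y | y ∉ t.dom ∧ ∀ x ∈ t.dom, dist y x = t.f x}

noncomputable def rank (t : Katetov D M) : ℝ := sInf (t.f '' ↑t.dom)

def orbDistSet (s t : Katetov D M) : Set ℝ :=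
  {m | ∃ x ∈ orb s, ∃ y ∈ orb t, dist x y = m}

noncomputable def dminK (s t : Katetov D M) : ℝ := sInf (orbDistSet s t)

noncomputable def dmin (A B : Set M) : ℝ := sInf {d | ∃ x ∈ A, ∃ y ∈ B, dist x y = d}

def IsHomogeneous (M : Type) [MetricSpace M] : Prop :=
  ∀ (A : Finset M) (f : M → M),
    (∀ x ∈ A, ∀ y ∈ A, dist (f x) (f y) = dist x y) →
    ∃ g : M ≃ᵢ M, ∀ x ∈ A, g x = f x

def IsUrysohn (D : Set ℝ) (M : Type) [MetricSpace M] : Prop :=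
  Countable M ∧ (∀ x y : M, dist x y ∈ D) ∧ IsHomogeneous M ∧
    ∀ (N : Type) [MetricSpace N], Finite N → (∀ x y : N, dist x y ∈ D) →
      ∃ f : N → M, Isometry f

/-!
A condition is a copy `C` of `M` together with a Katetov function `t`, a promise that only the
points of `C ∩ orb t` matter. By induction along the block `b₀ < … < b_n`, every condition of rank
`b_i` can be refined, within the same rank, to one for which `C ∩ orb t` is monochromatic. At rank
`b_n` the set `C ∩ orb t` is itself a copy of `M`.

For the step from `r` to `s = r⁺`, suppose first that the conditions of rank `r` with
`C' ∩ orb t' ⊆ Γ` are dense below `(C, t)`. A copy of `M` is then chosen in `C` point by point. A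
copy containing the finite set `P` of points chosen so far is kept in reserve, and all points of
`orb t` in it at distance less than `s`, hence at most `r`, from `P` are in `Γ`. A new point `y` is
first moved, and the reserve shrunk, so that the points far from `P` and at distance exactly `r`
from `y` are in `Γ`. Here `P` has finitely many types; density turns the points of one type at
distance `s` from `y` into points of `Γ`, and `s ≤ r + b₀` makes room for a new `y'` at distance
`b₀` from `y` and `r` from those points. A second move makes every point at distance at most `r`
from the new `y` one at distance exactly `r` from the old `y`. If density fails, then it holds for
the complement of `Γ` below some refinement of `(C, t)`, by the induction hypothesis.

Both moves rest on one lemma: a copy can be shrunk so that its points of given types over a finite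
set `P` have prescribed distances to a finite set `W`, as soon as the prescription is consistent.
-/

section

open scoped Classical

section Katetov

/-- Katetov functions are ordered by extension. -/
instance : Preorder (Katetov D M) where
  le t u := t.dom ⊆ u.dom ∧ ∀ x ∈ t.dom, u.f x = t.f x
  le_refl _ := ⟨subset_rfl, fun _ _ => rfl⟩
  le_trans _ _ _ h k := ⟨h.1.trans k.1, fun x hx => (k.2 x (h.1 hx)).trans (h.2 x hx)⟩

theorem mem_orb_iff {t : Katetov D M} {y : M} : y ∈ orb t ↔ ∀ x ∈ t.dom, dist y x = t.f x := by
  refine ⟨And.right, fun h => ⟨fun hy => ?_, h⟩⟩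
  exact (t.pos y hy).ne ((dist_self y).symm.trans (h y hy))

theorem orb_antitone : Antitone (orb : Katetov D M → Set M) := fun _ _ htu _ hy =>
  mem_orb_iff.2 fun x hx => (hy.2 x (htu.1 hx)).trans (htu.2 x hx)

namespace Katetov

/-- The Katetov function with empty domain, whose orbit is the whole space. -/
def empty : Katetov D M where
  dom := ∅
  f := 0
  mem := by simp only [Finset.notMem_empty, false_imp_iff, implies_true]
  pos := by simp only [Finset.notMem_empty, false_imp_iff, implies_true]
  ineq1 := by simp only [Finset.notMem_empty, false_imp_iff, implies_true]
  ineq2 := by simp only [Finset.notMem_empty, false_imp_iff, implies_true]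

/-- The distances from a point `c ∉ P` to the points of `P`. -/
def ofPoint (hdist : ∀ x y : M, dist x y ∈ D) (P : Finset M) (c : M) (hc : c ∉ P) :
    Katetov D M where
  dom := P
  f := dist c
  mem x _ := hdist c x
  pos x hx := dist_pos.2 fun h => hc (h ▸ hx)
  ineq1 x _ y _ := by simpa only [dist_comm c] using abs_dist_sub_le x y c
  ineq2 x _ y _ := dist_triangle_left x y c

theorem mem_orb_ofPoint {hdist : ∀ x y : M, dist x y ∈ D} {P : Finset M} {c y : M} {hc : c ∉ P} :
    y ∈ orb (ofPoint hdist P c hc) ↔ Set.EqOn (dist y) (dist c) P :=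
  mem_orb_iff

/-- The Katetov function with domain `{x}` and value `a`. -/
def single (x : M) (a : ℝ) (ha : a ∈ D) (hpos : 0 < a) : Katetov D M where
  dom := {x}
  f _ := a
  mem _ _ := ha
  pos _ _ := hpos
  ineq1 y _ z _ := by simpa only [sub_self, abs_zero] using dist_nonneg
  ineq2 y hy z hz := by
    rw [Finset.mem_singleton.1 hy, Finset.mem_singleton.1 hz, dist_self]
    positivity

/-- Two Katetov functions are compatible if they have a common extension, expressed by the Katetov
inequalities between the values of one and the values of the other. -/
def Compatible (t u : Katetov D M) : Prop :=
  ∀ x ∈ t.dom, ∀ y ∈ u.dom, |t.f x - u.f y| ≤ dist x y ∧ dist x y ≤ t.f x + u.f y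

theorem exists_union {t u : Katetov D M} (h : Compatible t u) :
    ∃ v, t ≤ v ∧ u ≤ v ∧ v.dom = t.dom ∪ u.dom := by
  set f : M → ℝ := fun x => if x ∈ t.dom then t.f x else u.f x
  have hft : ∀ x ∈ t.dom, f x = t.f x := fun x hx => if_pos hx
  have hfu : ∀ x ∈ u.dom, f x = u.f x := fun x hx => by
    by_cases hxt : x ∈ t.dom
    · have hxx := (h x hxt x hx).1
      rw [dist_self, abs_nonpos_iff, sub_eq_zero] at hxx
      exact (hft x hxt).trans hxx
    · exact if_neg hxt
  have hutf : ∀ x ∈ u.dom, ∀ y ∈ t.dom, |u.f x - t.f y| ≤ dist x y ∧ dist x y ≤ u.f x + t.f y :=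
    fun x hx y hy => by simpa only [dist_comm, abs_sub_comm, add_comm] using h y hy x hx
  have hineq : ∀ x ∈ t.dom ∪ u.dom, ∀ y ∈ t.dom ∪ u.dom,
      |f x - f y| ≤ dist x y ∧ dist x y ≤ f x + f y := by
    intro x hx y hy
    rcases Finset.mem_union.1 hx with hx | hx <;> rcases Finset.mem_union.1 hy with hy | hy
    · rw [hft x hx, hft y hy]; exact ⟨t.ineq1 x hx y hy, t.ineq2 x hx y hy⟩
    · rw [hft x hx, hfu y hy]; exact h x hx y hy
    · rw [hfu x hx, hft y hy]; exact hutf x hx y hy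
    · rw [hfu x hx, hfu y hy]; exact ⟨u.ineq1 x hx y hy, u.ineq2 x hx y hy⟩
  refine ⟨⟨t.dom ∪ u.dom, f, fun x hx => ?_, fun x hx => ?_, fun x hx y hy => (hineq x hx y hy).1,
    fun x hx y hy => (hineq x hx y hy).2⟩, ⟨Finset.subset_union_left, hft⟩,
    ⟨Finset.subset_union_right, hfu⟩, rfl⟩
  · rcases Finset.mem_union.1 hx with hx | hx
    · rw [hft x hx]; exact t.mem x hx
    · rw [hfu x hx]; exact u.mem x hx
  · rcases Finset.mem_union.1 hx with hx | hx
    · rw [hft x hx]; exact t.pos x hx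
    · rw [hfu x hx]; exact u.pos x hx

theorem exists_insert (t : Katetov D M) {x : M} {a : ℝ} (ha : a ∈ D) (hpos : 0 < a)
    (h : ∀ y ∈ t.dom, |a - t.f y| ≤ dist x y ∧ dist x y ≤ a + t.f y) :
    ∃ u, t ≤ u ∧ u.dom = insert x t.dom ∧ u.f x = a := by
  have hcompat : Compatible (single x a ha hpos) t := fun z hz y hy =>
    Finset.mem_singleton.1 hz ▸ h y hy
  obtain ⟨u, hxu, htu, hu⟩ := exists_union hcompat
  exact ⟨u, htu, hu, hxu.2 x (Finset.mem_singleton_self x)⟩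

end Katetov

end Katetov

section Isometric

/-- The map `φ` preserves the distances between points of `A`. -/
def IsometricOn (φ : M → M) (A : Set M) : Prop :=
  ∀ x ∈ A, ∀ y ∈ A, dist (φ x) (φ y) = dist x y

theorem eqOn_update_of_dist_eq {φ : M → M} {A : Set M} {x y : M}
    (hy : ∀ a ∈ A, dist y (φ a) = dist x a) :
    Set.EqOn (Function.update φ x y) φ A := by
  intro a ha
  rcases eq_or_ne a x with rfl | hax
  · rw [Function.update_self, ← dist_eq_zero, hy a ha, dist_self]
  · exact Function.update_of_ne hax y φ

namespace IsometricOn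

variable {φ : M → M} {A : Set M}

theorem id : IsometricOn id A := fun _ _ _ _ => rfl

theorem injOn (h : IsometricOn φ A) : Set.InjOn φ A := fun x hx y hy hxy =>
  dist_eq_zero.1 ((h x hx y hy).symm.trans (dist_eq_zero.2 hxy))

theorem update (h : IsometricOn φ A) {x y : M} (hy : ∀ a ∈ A, dist y (φ a) = dist x a) :
    IsometricOn (Function.update φ x y) (insert x A) := by
  have heq := eqOn_update_of_dist_eq hy
  rintro a (rfl | ha) c (rfl | hc)
  · rw [dist_self, dist_self]
  · rw [Function.update_self, heq hc, hy c hc]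
  · rw [Function.update_self, heq ha, dist_comm, hy a ha, dist_comm]
  · rw [heq ha, heq hc, h a ha c hc]

end IsometricOn

theorem Katetov.exists_map [Nonempty M] (t : Katetov D M) {φ : M → M} (hφ : IsometricOn φ t.dom) :
    ∃ u : Katetov D M, u.dom = t.dom.image φ ∧ ∀ x ∈ t.dom, u.f (φ x) = t.f x := by
  have hinv : ∀ x ∈ t.dom, Function.invFunOn φ t.dom (φ x) = x := hφ.injOn.leftInvOn_invFunOn
  refine ⟨⟨t.dom.image φ, t.f ∘ Function.invFunOn φ t.dom, ?_, ?_, ?_, ?_⟩, rfl,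
    fun x hx => congrArg t.f (hinv x hx)⟩
  · simp only [Finset.forall_mem_image, Function.comp_apply]
    exact fun x hx => (hinv x hx).symm ▸ t.mem x hx
  · simp only [Finset.forall_mem_image, Function.comp_apply]
    exact fun x hx => (hinv x hx).symm ▸ t.pos x hx
  · simp only [Finset.forall_mem_image, Function.comp_apply]
    intro x hx y hy
    rw [hinv x hx, hinv y hy, hφ x hx y hy]
    exact t.ineq1 x hx y hy
  · simp only [Finset.forall_mem_image, Function.comp_apply]
    intro x hx y hy
    rw [hinv x hx, hinv y hy, hφ x hx y hy]
    exact t.ineq2 x hx y hy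

end Isometric

section IsCopy

/-- The one-point extension property of a set `C` of points of `M`: every Katetov function with
domain in `C` is realised in `C`. For the countable Urysohn space `M` this says that `C` is
isometric to `M`. -/
def IsCopy (D : Set ℝ) (C : Set M) : Prop :=
  ∀ t : Katetov D M, ↑t.dom ⊆ C → (C ∩ orb t).Nonempty

variable {C : Set M}

theorem notMem_of_eqOn_dist {P : Finset M} {x y : M} (hx : x ∉ P)
    (h : Set.EqOn (dist y) (dist x) P) : y ∉ P := by
  intro hy
  have hxy : dist x y = 0 := by rw [← h hy, dist_self]
  exact hx (dist_eq_zero.1 hxy ▸ hy)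

namespace IsCopy

theorem exists_mem_orb_dist_eq (hdist : ∀ x y : M, dist x y ∈ D) (hC : IsCopy D C)
    {A : Finset M} {φ : M → M} (hφ : IsometricOn φ A) (hφC : ∀ a ∈ A, φ a ∈ C)
    (u : Katetov D M) (huC : ↑u.dom ⊆ C) {x : M}
    (hux : ∀ a ∈ A, ∀ w ∈ u.dom,
      |dist x a - u.f w| ≤ dist (φ a) w ∧ dist (φ a) w ≤ dist x a + u.f w) :
    ∃ y ∈ C ∩ orb u, ∀ a ∈ A, dist y (φ a) = dist x a := by
  have : Nonempty M := ⟨x⟩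
  by_cases hx : x ∈ A
  · refine ⟨φ x, ⟨hφC x hx, mem_orb_iff.2 fun w hw => ?_⟩, hφ x hx⟩
    obtain ⟨hlow, hup⟩ := hux x hx w hw
    rw [dist_self] at hlow hup
    linarith [neg_le_abs (0 - u.f w)]
  · obtain ⟨v, hv, hvf⟩ := (Katetov.ofPoint hdist A x hx).exists_map hφ
    have hv' : v.dom = A.image φ := hv
    obtain ⟨t, hvt, hut, ht⟩ := Katetov.exists_union (t := v) (u := u) (by
      simp only [Katetov.Compatible, hv', Finset.forall_mem_image]
      exact fun a ha w hw => (hvf a ha).symm ▸ hux a ha w hw)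
    obtain ⟨y, hyC, hy⟩ := hC t (by
      rw [ht, hv', Finset.coe_union, Finset.coe_image]
      exact Set.union_subset (Set.image_subset_iff.2 hφC) huC)
    refine ⟨y, ⟨hyC, orb_antitone hut hy⟩, fun a ha => ?_⟩
    exact (mem_orb_iff.1 (orb_antitone hvt hy) (φ a) (hv' ▸ Finset.mem_image_of_mem φ ha)).trans
      (hvf a ha)

theorem exists_dist_eq (hdist : ∀ x y : M, dist x y ∈ D) (hC : IsCopy D C)
    {A : Finset M} {φ : M → M} (hφ : IsometricOn φ A) (hφC : ∀ a ∈ A, φ a ∈ C) (x : M) :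
    ∃ y ∈ C, ∀ a ∈ A, dist y (φ a) = dist x a := by
  obtain ⟨y, hy, hyA⟩ := hC.exists_mem_orb_dist_eq hdist hφ hφC Katetov.empty
    (fun _ h => absurd h (Finset.notMem_empty _)) (x := x)
    (fun _ _ _ h => absurd h (Finset.notMem_empty _))
  exact ⟨y, hy.1, hyA⟩

theorem exists_dist_eq_of_eqOn_dist (hdist : ∀ x y : M, dist x y ∈ D) (hC : IsCopy D C)
    {P : Finset M} (hPC : ↑P ⊆ C) {y y' : M} (hyC : y ∈ C)
    (hy' : Set.EqOn (dist y') (dist y) P) (v : M) :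
    ∃ v₀ ∈ C, dist v₀ y = dist v y' ∧ Set.EqOn (dist v₀) (dist v) P := by
  have hid : ∀ p ∈ (P : Set M), dist y (id p) = dist y' p := fun p hp => (hy' hp).symm
  have hupd := eqOn_update_of_dist_eq hid
  obtain ⟨v₀, hv₀C, hv₀⟩ := hC.exists_dist_eq hdist (A := insert y' P)
    (φ := Function.update id y' y) (by
      rw [Finset.coe_insert]
      exact IsometricOn.id.update hid) (by
      simp only [Finset.forall_mem_insert, Function.update_self]
      exact ⟨hyC, fun p hp => (hupd hp).symm ▸ hPC hp⟩) v
  simp only [Finset.forall_mem_insert, Function.update_self] at hv₀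
  exact ⟨v₀, hv₀C, hv₀.1, fun p hp => (congrArg (dist v₀) (hupd hp)).symm.trans (hv₀.2 p hp)⟩

theorem exists_twin (hdist : ∀ x y : M, dist x y ∈ D) (hC : IsCopy D C) {P : Finset M}
    (hPC : ↑P ⊆ C) {y : M} (hyC : y ∈ C) (hyP : y ∉ P) {δ : ℝ} (hδ : δ ∈ D) (hδ0 : 0 < δ)
    (hδP : ∀ p ∈ P, δ ≤ 2 * dist y p) :
    ∃ z ∈ C, dist z y = δ ∧ Set.EqOn (dist z) (dist y) P := by
  obtain ⟨u, hu, hdom, huy⟩ :=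
    (Katetov.ofPoint hdist P y hyP).exists_insert (x := y) hδ hδ0 fun p hp => by
      change |δ - dist y p| ≤ dist y p ∧ dist y p ≤ δ + dist y p
      have := hδP p hp
      exact ⟨abs_le.2 ⟨by linarith, by linarith⟩, by linarith⟩
  have hdom' : u.dom = insert y P := hdom
  obtain ⟨z, hzC, hz⟩ := hC u (by
    rw [hdom', Finset.coe_insert]
    exact Set.insert_subset hyC hPC)
  exact ⟨z, hzC, (mem_orb_iff.1 hz y (hdom' ▸ Finset.mem_insert_self y P)).trans huy,
    Katetov.mem_orb_ofPoint.1 (orb_antitone hu hz)⟩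

theorem exists_mem_orb_notMem (hdist : ∀ x y : M, dist x y ∈ D) (hC : IsCopy D C) {P : Finset M}
    (hPC : ↑P ⊆ C) {δ : ℝ} (hδ : IsLeast {d ∈ D | 0 < d} δ) (t : Katetov D M)
    (ht : t.dom ⊆ P) : ∃ y ∈ C, y ∉ P ∧ y ∈ orb t := by
  obtain ⟨y, hyC, hy⟩ := hC t fun x hx => hPC (ht hx)
  by_cases hyP : y ∈ P
  · obtain ⟨z, hzC, hzy, hz⟩ := hC.exists_twin hdist (P := P.erase y)
      (fun x hx => hPC (Finset.mem_of_mem_erase hx)) hyC (Finset.notMem_erase y P) hδ.1.1 hδ.1.2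
      fun p hp => by
        have hpos : 0 < dist y p := dist_pos.2 (Finset.ne_of_mem_erase hp).symm
        linarith [hδ.2 ⟨hdist y p, hpos⟩]
    refine ⟨z, hzC, fun hzP => ?_, mem_orb_iff.2 fun x hx => ?_⟩
    · have hne : z ≠ y := dist_pos.1 (hzy.symm ▸ hδ.1.2)
      exact notMem_of_eqOn_dist (Finset.notMem_erase y P) hz (Finset.mem_erase.2 ⟨hne, hzP⟩)
    · have hne : x ≠ y := fun h => hy.1 (h ▸ hx)
      exact (hz (Finset.mem_erase.2 ⟨hne, ht hx⟩)).trans (hy.2 x hx)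
  · exact ⟨y, hyC, hyP, hy⟩

end IsCopy

theorem exists_finset_eqOn_dist (hD : D.Finite) (hdist : ∀ x y : M, dist x y ∈ D)
    (P : Finset M) (A : Set M) :
    ∃ R : Finset M, ↑R ⊆ A ∧ ∀ c ∈ A, ∃ c' ∈ R, Set.EqOn (dist c) (dist c') P := by
  let f : M → P → ℝ := fun c p => dist c p
  have hfin : (f '' A).Finite := (Set.Finite.pi' fun _ => hD).subset <| by
    rintro _ ⟨c, -, rfl⟩ p
    exact hdist c p
  obtain ⟨R, hRA, hR⟩ := Set.exists_subset_bijOn A f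
  have hRfin : R.Finite := hR.finite_iff_finite.2 hfin
  refine ⟨hRfin.toFinset, by rwa [hRfin.coe_toFinset], fun c hc => ?_⟩
  obtain ⟨c', hc', h⟩ := hR.surjOn (Set.mem_image_of_mem f hc)
  exact ⟨c', hRfin.mem_toFinset.2 hc', fun p hp => (congrFun h ⟨p, hp⟩).symm⟩

/-- A subset `T` of `M` that is a union of types over `P`, together with a Katetov function with
domain `W` for each of these types, with values `m v w` for `v ∈ T` and `w ∈ W`. The inequalities
say that the points of `T` can be moved onto the orbits of these Katetov functions, with `P` kept
fixed. -/
structure Prescription (D : Set ℝ) (P W : Finset M) (T : Set M) (m : M → M → ℝ) : Prop where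
  congr : ∀ v ∈ T, ∀ v', Set.EqOn (dist v') (dist v) P → v' ∈ T ∧ m v' = m v
  katetov : ∀ v ∈ T, ∃ u : Katetov D M, u.dom = W ∧ u.f = m v
  base : ∀ v ∈ T, ∀ w ∈ W, ∀ p ∈ P, |dist v p - m v w| ≤ dist p w ∧ dist p w ≤ dist v p + m v w
  compatible : ∀ v ∈ T, ∀ v' ∈ T, ∀ w ∈ W,
    |m v w - m v' w| ≤ dist v v' ∧ dist v v' ≤ m v w + m v' w

namespace Prescription

variable {P W : Finset M} {T : Set M} {m : M → M → ℝ}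

/-- The points of `C` whose distances to `C ∩ T` are consistent with the prescribed distances
from `C ∩ T` to `W`. A point of `T` is at distance `0` from itself, so here it has the
prescribed distances to `W`. -/
def consistent (C : Set M) (W : Finset M) (T : Set M) (m : M → M → ℝ) : Set M :=
  {c ∈ C | ∀ v ∈ C ∩ T, ∀ w ∈ W, |dist v c - m v w| ≤ dist c w ∧ dist c w ≤ dist v c + m v w}

theorem dist_eq_of_mem_consistent {c w : M} (hc : c ∈ consistent C W T m) (hcT : c ∈ T)
    (hw : w ∈ W) : dist c w = m c w := by
  obtain ⟨hlow, hup⟩ := hc.2 c ⟨hc.1, hcT⟩ w hw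
  rw [dist_self] at hlow hup
  linarith [neg_le_abs (0 - m c w)]

theorem exists_isometricOn_realizing (h : Prescription D P W T m)
    (hdist : ∀ x y : M, dist x y ∈ D) (hC : IsCopy D C) (hWC : ↑W ⊆ C) {Q : Finset M}
    (hQ : ↑Q ⊆ consistent C W T m) (V : Finset M) (hV : ↑V ⊆ C ∩ T) :
    ∃ φ : M → M, Set.EqOn φ id Q ∧ IsometricOn φ ↑(Q ∪ V) ∧ (∀ a ∈ Q ∪ V, φ a ∈ C) ∧
      ∀ v ∈ V, ∀ w ∈ W, dist (φ v) w = m v w := by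
  induction V using Finset.induction_on with
  | empty =>
    refine ⟨id, Set.eqOn_refl _ _, .id, fun a ha => ?_,
      fun v hv => absurd hv (Finset.notMem_empty v)⟩
    exact (hQ (by rwa [Finset.union_empty] at ha)).1
  | insert v V _ ih =>
    rw [Finset.coe_insert, Set.insert_subset_iff] at hV
    obtain ⟨φ, hφQ, hφ, hφC, hφW⟩ := ih hV.2
    obtain ⟨u, rfl, hum⟩ := h.katetov v hV.1.2
    obtain ⟨y, ⟨hyC, hyu⟩, hy⟩ := hC.exists_mem_orb_dist_eq hdist hφ hφC u hWC (x := v) (by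
      intro a ha w hw
      rw [hum]
      rcases Finset.mem_union.1 ha with ha | ha
      · rw [hφQ ha]
        exact (hQ ha).2 v hV.1 w hw
      · obtain ⟨hlow, hup⟩ := h.compatible v hV.1.2 a (hV.2 ha).2 w hw
        rw [hφW a ha w hw]
        obtain ⟨hlow₁, hlow₂⟩ := abs_le.1 hlow
        exact ⟨abs_le.2 ⟨by linarith, by linarith⟩, by linarith⟩)
    have hupd := eqOn_update_of_dist_eq hy
    refine ⟨Function.update φ v y, fun q hq => ?_, ?_, ?_, ?_⟩
    · exact (hupd (Finset.mem_union_left V hq)).trans (hφQ hq)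
    · simpa only [Finset.union_insert, Finset.coe_insert] using hφ.update hy
    · simp only [Finset.union_insert, Finset.forall_mem_insert, Function.update_self]
      exact ⟨hyC, fun a ha => (hupd ha).symm ▸ hφC a ha⟩
    · simp only [Finset.forall_mem_insert, Function.update_self]
      refine ⟨fun w hw => (mem_orb_iff.1 hyu w hw).trans (congrFun hum w), fun a ha => ?_⟩
      rw [hupd (Finset.mem_union_right Q ha)]
      exact hφW a ha

theorem isCopy_consistent (h : Prescription D P W T m) (hD : D.Finite)
    (hdist : ∀ x y : M, dist x y ∈ D) (hC : IsCopy D C) (hPC : ↑P ⊆ C) (hWC : ↑W ⊆ C)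
    (hP : ↑P ⊆ consistent C W T m) : IsCopy D (consistent C W T m) := by
  intro q hq
  obtain ⟨y, hyC, hyq⟩ := hC q fun x hx => (hq hx).1
  obtain ⟨V, hVC, hV⟩ := exists_finset_eqOn_dist hD hdist (insert y P) (C ∩ T)
  obtain ⟨φ, hφQ, hφ, hφC, hφW⟩ := h.exists_isometricOn_realizing hdist hC hWC (Q := q.dom ∪ P)
    (by rw [Finset.coe_union]; exact Set.union_subset hq hP) V hVC
  obtain ⟨y', hy'C, hy'⟩ := hC.exists_dist_eq hdist hφ hφC y
  have hy'Q : Set.EqOn (dist y') (dist y) ↑(q.dom ∪ P) := fun a ha => by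
    simpa only [hφQ ha, id] using hy' a (Finset.mem_union_left V ha)
  have hy'P : Set.EqOn (dist y') (dist y) P := fun p hp => hy'Q (Finset.mem_union_right _ hp)
  refine ⟨y', ⟨hy'C, fun v hv w hw => ?_⟩, mem_orb_iff.2 fun x hx => ?_⟩
  -- A representative `v₁` of the type of `v` over `P ∪ {y'}` has been moved by `φ` to a point with
  -- the prescribed distances to `W`, so `y'` is consistent with `v` by the triangle inequality.
  · obtain ⟨v₀, hv₀C, hv₀y, hv₀P⟩ := hC.exists_dist_eq_of_eqOn_dist hdist hPC hyC hy'P v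
    obtain ⟨hv₀T, hm₀⟩ := h.congr v hv.2 v₀ hv₀P
    obtain ⟨v₁, hv₁, hv₀₁⟩ := hV v₀ ⟨hv₀C, hv₀T⟩
    have hm₁ : m v₁ = m v₀ := (h.congr v₀ hv₀T v₁ fun p hp =>
      (hv₀₁ (Finset.mem_insert_of_mem hp)).symm).2
    have hdist_y' : dist (φ v₁) y' = dist v y' := by
      rw [dist_comm, hy' v₁ (Finset.mem_union_right _ hv₁), dist_comm,
        ← hv₀₁ (Finset.mem_insert_self y P), hv₀y]
    have hdist_w : dist (φ v₁) w = m v w := by rw [hφW v₁ hv₁ w hw, hm₁, hm₀]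
    rw [← hdist_y', ← hdist_w]
    exact ⟨by simpa only [dist_comm] using abs_dist_sub_le y' w (φ v₁),
      dist_triangle_left y' w (φ v₁)⟩
  · rw [hy'Q (Finset.mem_union_left P hx)]
    exact hyq.2 x hx

theorem exists_isCopy (h : Prescription D P W T m) (hD : D.Finite)
    (hdist : ∀ x y : M, dist x y ∈ D) (hC : IsCopy D C) (hPC : ↑P ⊆ C) (hWC : ↑W ⊆ C) :
    ∃ C' ⊆ C, IsCopy D C' ∧ ↑P ⊆ C' ∧ ∀ c ∈ C', c ∈ T → ∀ w ∈ W, dist c w = m c w := by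
  have hP : ↑P ⊆ consistent C W T m := fun p hp =>
    ⟨hPC hp, fun v hv w hw => h.base v hv.2 w hw p hp⟩
  exact ⟨consistent C W T m, fun _ hc => hc.1, h.isCopy_consistent hD hdist hC hPC hWC hP, hP,
    fun _ hc hcT _ hw => dist_eq_of_mem_consistent hc hcT hw⟩

end Prescription

theorem IsCopy.exists_subset_orb (hD : D.Finite) (hdist : ∀ x y : M, dist x y ∈ D)
    (hC : IsCopy D C) {P : Finset M} (hPC : ↑P ⊆ C) (u : Katetov D M) (huC : ↑u.dom ⊆ C)
    {w : M} (hwu : w ∈ orb u) (hclose : ∃ z ∈ P, ∀ x ∈ u.dom, dist w z ≤ u.f x) :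
    ∃ C' ⊆ C, IsCopy D C' ∧ ↑P ⊆ C' ∧ ∀ c ∈ C', Set.EqOn (dist c) (dist w) P → c ∈ orb u := by
  have hpre : Prescription D P u.dom {c | Set.EqOn (dist c) (dist w) P} fun _ => u.f := by
    refine ⟨fun v hv v' hv' => ⟨hv'.trans hv, rfl⟩, fun _ _ => ⟨u, rfl, rfl⟩,
      fun v hv x hx p hp => ?_, fun v hv v' hv' x hx => ⟨?_, ?_⟩⟩
    · rw [hv hp, ← mem_orb_iff.1 hwu x hx]
      exact ⟨by simpa only [dist_comm] using abs_dist_sub_le p x w, dist_triangle_left p x w⟩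
    · simpa only [sub_self, abs_zero] using dist_nonneg
    · obtain ⟨z, hz, hzu⟩ := hclose
      calc dist v v' ≤ dist v z + dist v' z := dist_triangle_right v v' z
        _ = dist w z + dist w z := by rw [hv hz, hv' hz]
        _ ≤ u.f x + u.f x := add_le_add (hzu x hx) (hzu x hx)
  obtain ⟨C', hC'C, hC', hP, h⟩ := hpre.exists_isCopy hD hdist hC hPC huC
  exact ⟨C', hC'C, hC', hP, fun c hc hcw => mem_orb_iff.2 fun x hx => h c hc hcw x hx⟩

end IsCopy

section Refinement

/-- `r < s` are consecutive elements of a block of `D` whose least element `a` is the least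
positive element of `D`. -/
structure IsBlockStep (D : Set ℝ) (a r s : ℝ) : Prop where
  isLeast : IsLeast {d ∈ D | 0 < d} a
  left_mem : r ∈ D
  right_mem : s ∈ D
  left_pos : 0 < r
  lt : r < s
  le_of_lt : ∀ d ∈ D, d < s → d ≤ r
  le_add : s ≤ r + a

/-- A copy `C`, together with a promise `t` about its points: only `C ∩ orb t` matters later. The
condition has rank at least `r`. This is stated pointwise because `rank t = 0` when the domain of
`t` is empty. -/
structure IsCondition (C : Set M) (t : Katetov D M) (r : ℝ) : Prop where
  isCopy : IsCopy D C
  dom_subset : ↑t.dom ⊆ C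
  le : ∀ x ∈ t.dom, r ≤ t.f x

/-- Below `(C, t)`, every condition of rank `s` extends to a condition of rank `r` all of whose
points are in `Γ`. -/
def DenseBelow (Γ C : Set M) (t : Katetov D M) (r s : ℝ) : Prop :=
  ∀ C' ⊆ C, ∀ t' ≥ t, IsCondition C' t' s →
    ∃ C'' ⊆ C', ∃ t'' ≥ t', IsCondition C'' t'' r ∧ C'' ∩ orb t'' ⊆ Γ

/-- A copy containing the finite set `P` and a further point `y`. -/
structure IsPointedCopy (D : Set ℝ) (P : Finset M) (C : Set M) (y : M) : Prop where
  isCopy : IsCopy D C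
  base_subset : ↑P ⊆ C
  mem : y ∈ C
  notMem : y ∉ P

/-- The pointed copy `(C', y')` is obtained from `(C, y)` by shrinking the copy and moving the
point, without changing its distances to `P`. -/
structure Refines (D : Set ℝ) (P : Finset M) (C : Set M) (y : M) (C' : Set M) (y' : M) : Prop
    extends IsPointedCopy D P C' y' where
  subset : C' ⊆ C
  eqOn : Set.EqOn (dist y') (dist y) P

/-- The points of the orbit of `t` at distance at least `s` from all points of `P`. -/
def farOrb (t : Katetov D M) (P : Finset M) (s : ℝ) : Set M :=
  {c ∈ orb t | ∀ p ∈ P, s ≤ dist c p}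

theorem IsPointedCopy.refines {P : Finset M} {C : Set M} {y : M} (h : IsPointedCopy D P C y) :
    Refines D P C y C y :=
  ⟨h, subset_rfl, Set.eqOn_refl _ _⟩

theorem Refines.trans {P : Finset M} {C C' C'' : Set M} {y y' y'' : M}
    (h : Refines D P C y C' y') (h' : Refines D P C' y' C'' y'') : Refines D P C y C'' y'' :=
  ⟨h'.toIsPointedCopy, h'.subset.trans h.subset, h'.eqOn.trans h.eqOn⟩

theorem mem_farOrb_of_eqOn_dist {t : Katetov D M} {P : Finset M} {s : ℝ} (htP : t.dom ⊆ P)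
    {c c' : M} (hc : c ∈ farOrb t P s) (h : Set.EqOn (dist c') (dist c) P) :
    c' ∈ farOrb t P s :=
  ⟨mem_orb_iff.2 fun x hx => (h (htP hx)).trans (hc.1.2 x hx), fun p hp => (h hp).symm ▸ hc.2 p hp⟩

namespace IsBlockStep

variable {a r s : ℝ}

theorem bot_pos (h : IsBlockStep D a r s) : 0 < a := h.isLeast.1.2

theorem bot_le_left (h : IsBlockStep D a r s) : a ≤ r := h.isLeast.2 ⟨h.left_mem, h.left_pos⟩

theorem right_pos (h : IsBlockStep D a r s) : 0 < s := h.left_pos.trans h.lt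

theorem bot_le_dist (h : IsBlockStep D a r s) (hdist : ∀ x y : M, dist x y ∈ D) {x y : M}
    (hxy : x ≠ y) : a ≤ dist x y :=
  h.isLeast.2 ⟨hdist x y, dist_pos.2 hxy⟩

end IsBlockStep

variable {a r s : ℝ} {Γ C₀ C : Set M} {t : Katetov D M} {P : Finset M} {y : M}

theorem exists_katetov_ge_of_dist_eq (hstep : IsBlockStep D a r s)
    (hdist : ∀ x y : M, dist x y ∈ D) (htP : t.dom ⊆ P) {c : M} (hc : c ∈ farOrb t P s)
    (hcy : dist c y = r) :
    ∃ u ≥ t, u.dom = insert y P ∧ u.f y = s ∧ ∀ p ∈ P, u.f p = dist c p := by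
  have hcP : c ∉ P := fun h => by
    have := hc.2 c h
    rw [dist_self] at this
    exact this.not_gt hstep.right_pos
  obtain ⟨u, hu, hdom, huy⟩ := (Katetov.ofPoint hdist P c hcP).exists_insert (x := y)
    hstep.right_mem hstep.right_pos fun p hp => by
      change |s - dist c p| ≤ dist y p ∧ dist y p ≤ s + dist c p
      have hfar := hc.2 p hp
      have h₁ := dist_triangle c y p
      have h₂ := dist_triangle_left y p c
      rw [hcy] at h₁ h₂
      have := hstep.lt
      exact ⟨abs_le.2 ⟨by linarith, by linarith [dist_nonneg (x := y) (y := p)]⟩, by linarith⟩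
  refine ⟨u, ⟨htP.trans hu.1, fun x hx => ?_⟩, hdom, huy, fun p hp => hu.2 p hp⟩
  exact (hu.2 x (htP hx)).trans (hc.1.2 x hx)

theorem exists_shifted_point (hstep : IsBlockStep D a r s) (hdist : ∀ x y : M, dist x y ∈ D)
    (h : IsPointedCopy D P C y) {c w : M} (hcy : dist c y = r) (hwC : w ∈ C) (hwy : dist w y = s)
    (hw : Set.EqOn (dist w) (dist c) P) :
    ∃ y' ∈ C, dist y' y = a ∧ dist y' w = r ∧ Set.EqOn (dist y') (dist y) P := by
  have hid : ∀ p ∈ (P : Set M), dist w (id p) = dist c p := fun p hp => hw hp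
  have hupd := eqOn_update_of_dist_eq hid
  have hle := hstep.le_add
  have har := hstep.bot_le_left
  have hs := hstep.right_pos
  obtain ⟨y', ⟨hy'C, hy'⟩, hy'A⟩ := h.isCopy.exists_mem_orb_dist_eq hdist
    (A := insert c P) (φ := Function.update id c w) (x := y)
    (by rw [Finset.coe_insert]; exact IsometricOn.id.update hid)
    (by
      simp only [Finset.forall_mem_insert, Function.update_self]
      exact ⟨hwC, fun p hp => (hupd hp).symm ▸ h.base_subset hp⟩)
    (Katetov.single y a hstep.isLeast.1.1 hstep.bot_pos)
    (by simpa only [Katetov.single, Finset.coe_singleton, Set.singleton_subset_iff] using h.mem)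
    (by
      simp only [Katetov.single, Finset.mem_singleton, forall_eq, Finset.forall_mem_insert,
        Function.update_self, dist_comm y c, hcy, hwy]
      refine ⟨⟨abs_le.2 ⟨by linarith, by linarith [hstep.lt]⟩, by linarith⟩, fun p hp => ?_⟩
      have hap : a ≤ dist y p := hstep.bot_le_dist hdist fun hyp => h.notMem (hyp.symm ▸ hp)
      rw [hupd hp, id, dist_comm p y]
      have := hstep.bot_pos
      exact ⟨abs_le.2 ⟨by linarith, by linarith⟩, by linarith⟩)
  simp only [Finset.forall_mem_insert, Function.update_self] at hy'A
  refine ⟨y', hy'C, mem_orb_iff.1 hy' y (Finset.mem_singleton_self y), ?_, fun p hp => ?_⟩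
  · rw [hy'A.1, dist_comm, hcy]
  · rw [← hy'A.2 p hp, hupd hp, id]

theorem exists_refines_of_mem_farOrb (hstep : IsBlockStep D a r s) (hD : D.Finite)
    (hdist : ∀ x y : M, dist x y ∈ D) (hdense : DenseBelow Γ C₀ t r s) (htP : t.dom ⊆ P)
    (hCC₀ : C ⊆ C₀) (h : IsPointedCopy D P C y) {c₀ : M} (hc₀ : c₀ ∈ farOrb t P s)
    (hc₀y : dist c₀ y = r) :
    ∃ C' y', Refines D P C y C' y' ∧ y ∈ C' ∧ dist y' y = a ∧
      ∀ c ∈ C', Set.EqOn (dist c) (dist c₀) P → dist c y = s → dist c y' = r → c ∈ Γ := by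
  obtain ⟨t₁, htt₁, ht₁dom, ht₁y, ht₁P⟩ := exists_katetov_ge_of_dist_eq hstep hdist htP hc₀ hc₀y
  have hcond : IsCondition C t₁ s := by
    refine ⟨h.isCopy, ?_, ?_⟩
    · rw [ht₁dom, Finset.coe_insert]
      exact Set.insert_subset h.mem h.base_subset
    · rw [ht₁dom]
      simp only [Finset.forall_mem_insert, ht₁y, le_refl, true_and]
      exact fun p hp => (ht₁P p hp).symm ▸ hc₀.2 p hp
  obtain ⟨C₁, hC₁C, u, ht₁u, hu, huΓ⟩ := hdense C hCC₀ t₁ htt₁ hcond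
  obtain ⟨w, hwC₁, hwu⟩ := hu.isCopy u hu.dom_subset
  have hwt₁ := mem_orb_iff.1 (orb_antitone ht₁u hwu)
  rw [ht₁dom] at hwt₁
  have hwy : dist w y = s := (hwt₁ y (Finset.mem_insert_self y P)).trans ht₁y
  have hwP : Set.EqOn (dist w) (dist c₀) P := fun p hp =>
    (hwt₁ p (Finset.mem_insert_of_mem hp)).trans (ht₁P p hp)
  have hyP : ↑(insert y P) ⊆ C₁ := fun p hp =>
    hu.dom_subset (ht₁u.1 (by rw [ht₁dom]; exact hp))
  rw [Finset.coe_insert, Set.insert_subset_iff] at hyP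
  obtain ⟨y', hy'C₁, hy'y, hy'w, hy'P⟩ := exists_shifted_point hstep hdist
    ⟨hu.isCopy, hyP.2, hyP.1, h.notMem⟩ hc₀y hwC₁ hwy hwP
  obtain ⟨C', hC'C₁, hC', hP', hC'u⟩ := hu.isCopy.exists_subset_orb hD hdist
    (P := insert y' (insert y P))
    (by simpa only [Finset.coe_insert] using
      Set.insert_subset hy'C₁ (Set.insert_subset hyP.1 hyP.2))
    u hu.dom_subset hwu
    ⟨y', Finset.mem_insert_self _ _, fun x hx => by rw [dist_comm, hy'w]; exact hu.le x hx⟩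
  simp only [Finset.coe_insert, Set.insert_subset_iff] at hP'
  refine ⟨C', y', ⟨⟨hC', hP'.2.2, hP'.1, notMem_of_eqOn_dist h.notMem hy'P⟩, hC'C₁.trans hC₁C,
    hy'P⟩, hP'.2.1, hy'y, fun c hc hcP hcy hcy' => huΓ ⟨hC'C₁ hc, hC'u c hc ?_⟩⟩
  simp only [Finset.coe_insert]
  rintro p (rfl | rfl | hp)
  · rw [hcy', dist_comm, hy'w]
  · rw [hcy, hwy]
  · rw [hcP hp, hwP hp]

theorem prescription_split_types (hstep : IsBlockStep D a r s) (hdist : ∀ x y : M, dist x y ∈ D)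
    (htP : t.dom ⊆ P) {y' : M} (hy'P : Set.EqOn (dist y') (dist y) P) (hy'y : dist y' y = a)
    (c₀ : M) :
    Prescription D (insert y' P) {y} {c ∈ farOrb t P s | dist c y' = r}
      fun c _ => if Set.EqOn (dist c) (dist c₀) P then s else r := by
  have hlt := hstep.lt
  have hle := hstep.le_add
  have har := hstep.bot_le_left
  refine ⟨fun v hv v' hv' => ?_, fun _ _ => ?_, ?_, ?_⟩
  · have hvy' : dist v' y' = dist v y' := hv' (Finset.mem_insert_self y' P)
    have hvP : Set.EqOn (dist v') (dist v) P := fun p hp => hv' (Finset.mem_insert_of_mem hp)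
    refine ⟨⟨mem_farOrb_of_eqOn_dist htP hv.1 hvP, hvy'.trans hv.2⟩, ?_⟩
    have htype : Set.EqOn (dist v') (dist c₀) P ↔ Set.EqOn (dist v) (dist c₀) P :=
      ⟨hvP.symm.trans, hvP.trans⟩
    simp only [htype]
  · split_ifs
    · exact ⟨.single y s hstep.right_mem hstep.right_pos, rfl, rfl⟩
    · exact ⟨.single y r hstep.left_mem hstep.left_pos, rfl, rfl⟩
  · simp only [Finset.mem_singleton, forall_eq, Finset.forall_mem_insert]
    refine fun v hv => ⟨?_, fun p hp => ?_⟩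
    · rw [hv.2, hy'y]
      split_ifs <;> exact ⟨abs_le.2 ⟨by linarith, by linarith⟩, by linarith⟩
    · have hfar := hv.1.2 p hp
      have hpy : dist p y = dist y' p := by rw [dist_comm p y, hy'P hp]
      have h₁ := dist_triangle v y' p
      have h₂ := dist_triangle_left y' p v
      rw [hv.2] at h₁ h₂
      rw [hpy]
      split_ifs <;> exact ⟨abs_le.2 ⟨by linarith [dist_nonneg (x := y') (y := p)],
        by linarith⟩, by linarith⟩
  · simp only [Finset.mem_singleton, forall_eq]
    intro v hv v' hv'
    have hup : dist v v' ≤ r + r := by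
      simpa only [hv.2, hv'.2] using dist_triangle_right v v' y'
    split_ifs with htype htype' htype'
    · exact ⟨by simpa only [sub_self, abs_zero] using dist_nonneg, by linarith⟩
    · have hne := hstep.bot_le_dist hdist (x := v) (y := v') fun hvv' => htype' (hvv' ▸ htype)
      exact ⟨abs_le.2 ⟨by linarith, by linarith⟩, by linarith⟩
    · have hne := hstep.bot_le_dist hdist (x := v) (y := v') fun hvv' => htype (hvv' ▸ htype')
      exact ⟨abs_le.2 ⟨by linarith, by linarith⟩, by linarith⟩
    · exact ⟨by simpa only [sub_self, abs_zero] using dist_nonneg, by linarith⟩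

theorem exists_refines_insert_type (hstep : IsBlockStep D a r s) (hD : D.Finite)
    (hdist : ∀ x y : M, dist x y ∈ D) (hdense : DenseBelow Γ C₀ t r s) (htP : t.dom ⊆ P)
    (hCC₀ : C ⊆ C₀) (h : IsPointedCopy D P C y) (R : Finset M) (c₀ : M)
    (hR : ∀ c ∈ C, c ∈ farOrb t P s → dist c y = r →
      (∃ c' ∈ R, Set.EqOn (dist c) (dist c') P) → c ∈ Γ) :
    ∃ C' y', Refines D P C y C' y' ∧ ∀ c ∈ C', c ∈ farOrb t P s → dist c y' = r →
      (∃ c' ∈ insert c₀ R, Set.EqOn (dist c) (dist c') P) → c ∈ Γ := by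
  by_cases hc₀ : ∃ c₁ ∈ farOrb t P s, Set.EqOn (dist c₁) (dist c₀) P ∧ dist c₁ y = r
  · obtain ⟨c₁, hc₁, hc₁₀, hc₁y⟩ := hc₀
    obtain ⟨C₁, y', href, hyC₁, hy'y, hΓ⟩ := exists_refines_of_mem_farOrb hstep hD hdist hdense htP
      hCC₀ h hc₁ hc₁y
    -- Points of the type of `c₀` are sent to distance `s` from `y`, so into `Γ`; all others are
    -- sent to distance `r` from `y`, where those whose type is in `R` are in `Γ` already.
    obtain ⟨C', hC'C₁, hC', hP', hpre⟩ := (prescription_split_types hstep hdist htP href.eqOn hy'y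
      c₀).exists_isCopy hD hdist href.isCopy
      (by simpa only [Finset.coe_insert] using Set.insert_subset href.mem href.base_subset)
      (by simpa only [Finset.coe_singleton, Set.singleton_subset_iff] using hyC₁)
    rw [Finset.coe_insert, Set.insert_subset_iff] at hP'
    refine ⟨C', y', ⟨⟨hC', hP'.2, hP'.1, href.notMem⟩, hC'C₁.trans href.subset, href.eqOn⟩,
      fun c hc hcfar hcy' hctype => ?_⟩
    have hcy := hpre c hc ⟨hcfar, hcy'⟩ y (Finset.mem_singleton_self y)
    rw [Finset.exists_mem_insert] at hctype
    by_cases hcc₀ : Set.EqOn (dist c) (dist c₀) P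
    · rw [if_pos hcc₀] at hcy
      exact hΓ c (hC'C₁ hc) (hcc₀.trans hc₁₀.symm) hcy hcy'
    · rw [if_neg hcc₀] at hcy
      exact hR c (href.subset (hC'C₁ hc)) hcfar hcy (hctype.resolve_left hcc₀)
  · refine ⟨C, y, h.refines, fun c hc hcfar hcy hctype => ?_⟩
    rw [Finset.exists_mem_insert] at hctype
    exact hR c hc hcfar hcy (hctype.resolve_left fun hcc₀ => hc₀ ⟨c, hcfar, hcc₀, hcy⟩)

theorem exists_refines_of_dist_eq (hstep : IsBlockStep D a r s) (hD : D.Finite)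
    (hdist : ∀ x y : M, dist x y ∈ D) (hdense : DenseBelow Γ C₀ t r s) (htP : t.dom ⊆ P)
    (hCC₀ : C ⊆ C₀) (h : IsPointedCopy D P C y) :
    ∃ C' y', Refines D P C y C' y' ∧ ∀ c ∈ C', c ∈ farOrb t P s → dist c y' = r → c ∈ Γ := by
  have hR : ∀ R : Finset M, ∃ C' y', Refines D P C y C' y' ∧
      ∀ c ∈ C', c ∈ farOrb t P s → dist c y' = r →
        (∃ c' ∈ R, Set.EqOn (dist c) (dist c') P) → c ∈ Γ := by
    intro R
    induction R using Finset.induction_on with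
    | empty =>
      exact ⟨C, y, h.refines, fun _ _ _ _ ⟨c', hc', _⟩ => absurd hc' (Finset.notMem_empty c')⟩
    | insert c₀ R _ ih =>
      obtain ⟨C₁, y₁, href₁, hΓ₁⟩ := ih
      obtain ⟨C₂, y₂, href₂, hΓ₂⟩ := exists_refines_insert_type hstep hD hdist hdense htP
        (href₁.subset.trans hCC₀) href₁.toIsPointedCopy R c₀ hΓ₁
      exact ⟨C₂, y₂, href₁.trans href₂, hΓ₂⟩
  obtain ⟨R, -, hRtypes⟩ := exists_finset_eqOn_dist hD hdist P Set.univ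
  obtain ⟨C', y', href, hΓ⟩ := hR R
  exact ⟨C', y', href, fun c hc hcfar hcy' => hΓ c hc hcfar hcy' (hRtypes c (Set.mem_univ c))⟩

theorem prescription_close_points (hstep : IsBlockStep D a r s) (htP : t.dom ⊆ P) {y' : M}
    (hy'P : Set.EqOn (dist y') (dist y) P) (hle : dist y' y ≤ r)
    (hy'y : dist y' y = r ∨ ∃ p ∈ P, dist y p = dist y' y) :
    Prescription D (insert y' P) {y} {c ∈ farOrb t P s | dist c y' ≤ r} fun _ _ => r := by
  have hlt := hstep.lt
  refine ⟨fun v hv v' hv' => ?_, fun _ _ => ?_, ?_, ?_⟩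
  · have hvy' : dist v' y' = dist v y' := hv' (Finset.mem_insert_self y' P)
    have hvP : Set.EqOn (dist v') (dist v) P := fun p hp => hv' (Finset.mem_insert_of_mem hp)
    exact ⟨⟨mem_farOrb_of_eqOn_dist htP hv.1 hvP, hvy'.trans_le hv.2⟩, rfl⟩
  · exact ⟨.single y r hstep.left_mem hstep.left_pos, rfl, rfl⟩
  · simp only [Finset.mem_singleton, forall_eq, Finset.forall_mem_insert]
    refine fun v ⟨hvfar, hvy'⟩ => ⟨?_, fun p hp => ?_⟩
    · have hlow : r - dist v y' ≤ dist y' y := by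
        rcases hy'y with hy'y | ⟨p, hp, hyp⟩
        · linarith [dist_nonneg (x := v) (y := y')]
        · linarith [hvfar.2 p hp, dist_triangle v y' p, hy'P hp]
      exact ⟨abs_le.2 ⟨by linarith, by linarith⟩, by linarith [dist_nonneg (x := v) (y := y')]⟩
    · have hfar := hvfar.2 p hp
      have hpy : dist p y = dist y' p := by rw [dist_comm p y, hy'P hp]
      have h₁ := dist_triangle v y' p
      have h₂ := dist_triangle_left y' p v
      rw [hpy]
      exact ⟨abs_le.2 ⟨by linarith [dist_nonneg (x := y') (y := p)], by linarith⟩, by linarith⟩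
  · simp only [Finset.mem_singleton, forall_eq, sub_self, abs_zero, dist_nonneg, true_and]
    exact fun v hv v' hv' => (dist_triangle_right v v' y').trans (add_le_add hv.2 hv'.2)

theorem exists_refines_of_dist_le (hstep : IsBlockStep D a r s) (hD : D.Finite)
    (hdist : ∀ x y : M, dist x y ∈ D) (htP : t.dom ⊆ P) (h : IsPointedCopy D P C y)
    (hΓ : ∀ c ∈ C, c ∈ farOrb t P s → dist c y = r → c ∈ Γ) :
    ∃ C' y', Refines D P C y C' y' ∧ ∀ c ∈ C', c ∈ farOrb t P s → dist c y' ≤ r → c ∈ Γ := by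
  -- If `δ < r`, some `p ∈ P` is at distance `δ` from `y'`, so points far from `P` are at distance
  -- at least `s - δ` from `y'`; this makes distance `r` from `y` consistent.
  obtain ⟨δ, hδmem, hδmin⟩ := (insert r (P.image (dist y))).exists_min_image id
    (Finset.insert_nonempty _ _)
  simp only [Finset.mem_insert, Finset.mem_image, id, forall_eq_or_imp, forall_exists_index,
    and_imp, forall_apply_eq_imp_iff₂] at hδmem hδmin
  have hδ : δ ∈ D ∧ 0 < δ := by
    rcases hδmem with rfl | ⟨p, hp, rfl⟩
    · exact ⟨hstep.left_mem, hstep.left_pos⟩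
    · exact ⟨hdist y p, dist_pos.2 fun hyp => h.notMem (hyp.symm ▸ hp)⟩
  obtain ⟨y', hy'C, rfl, hy'P⟩ := h.isCopy.exists_twin hdist h.base_subset h.mem h.notMem hδ.1 hδ.2
    fun p hp => by linarith [hδmin.2 p hp]
  obtain ⟨C', hC'C, hC', hP', hpre⟩ := (prescription_close_points hstep htP hy'P hδmin.1
    hδmem).exists_isCopy hD hdist h.isCopy
    (by simpa only [Finset.coe_insert] using Set.insert_subset hy'C h.base_subset)
    (by simpa only [Finset.coe_singleton, Set.singleton_subset_iff] using h.mem)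
  rw [Finset.coe_insert, Set.insert_subset_iff] at hP'
  refine ⟨C', y', ⟨⟨hC', hP'.2, hP'.1, notMem_of_eqOn_dist h.notMem hy'P⟩, hC'C, hy'P⟩,
    fun c hc hcfar hcy' => hΓ c (hC'C hc) hcfar ?_⟩
  exact hpre c hc ⟨hcfar, hcy'⟩ y (Finset.mem_singleton_self y)

end Refinement

section Gluing

theorem exists_forall_finset_eqOn {α β : Type*} [Countable α]
    {G : Finset α → (α → β) → Prop} {A : Finset α} {φ : α → β} (hG : G A φ)
    (hstep : ∀ A φ, G A φ → ∀ x ∉ A, ∃ ψ, Set.EqOn ψ φ A ∧ G (insert x A) ψ) :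
    ∃ ψ : α → β, Set.EqOn ψ φ A ∧
      ∀ F : Finset α, ∃ (A' : Finset α) (φ' : α → β), F ⊆ A' ∧ G A' φ' ∧ Set.EqOn ψ φ' A' := by
  let σ := {p : Finset α × (α → β) // G p.1 p.2}
  let _ : Preorder σ :=
    { le := fun p q => p.1.1 ⊆ q.1.1 ∧ Set.EqOn q.1.2 p.1.2 p.1.1
      le_refl := fun _ => ⟨subset_rfl, Set.eqOn_refl _ _⟩
      le_trans := fun _ _ _ h k => ⟨h.1.trans k.1, fun x hx => (k.2 (h.1 hx)).trans (h.2 hx)⟩ }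
  let _ : Encodable α := Encodable.ofCountable α
  let defined : α → Order.Cofinal σ := fun x =>
    { carrier := {p | x ∈ p.1.1}
      isCofinal := fun p => by
        by_cases hx : x ∈ p.1.1
        · exact ⟨p, hx, le_rfl⟩
        · obtain ⟨ψ, hψ, hGψ⟩ := hstep p.1.1 p.1.2 p.2 x hx
          exact ⟨⟨(insert x p.1.1, ψ), hGψ⟩, Finset.mem_insert_self x _,
            Finset.subset_insert x _, hψ⟩ }
  let seq : ℕ → σ := Order.sequenceOfCofinals ⟨(A, φ), hG⟩ defined
  have hmono : Monotone seq := Order.sequenceOfCofinals.monotone _ _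
  have hmem : ∀ x, x ∈ (seq (Encodable.encode x + 1)).1.1 := fun x =>
    Order.sequenceOfCofinals.encode_mem _ defined x
  let ψ : α → β := fun x => (seq (Encodable.encode x + 1)).1.2 x
  have hψ : ∀ N, Set.EqOn ψ (seq N).1.2 (seq N).1.1 := fun N x hx => by
    rcases le_total N (Encodable.encode x + 1) with h | h
    · exact (hmono h).2 hx
    · exact ((hmono h).2 (hmem x)).symm
  refine ⟨ψ, hψ 0, fun F => ?_⟩
  let N := F.sup fun x => Encodable.encode x + 1
  exact ⟨(seq N).1.1, (seq N).1.2, fun x hx => (hmono (Finset.le_sup hx)).1 (hmem x),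
    (seq N).2, hψ N⟩

theorem exists_isometry_of_forall_katetov [Countable M] (hdist : ∀ x y : M, dist x y ∈ D)
    {Good : Finset M → Prop} {P : Finset M} (hP : Good P)
    (hstep : ∀ K, Good K → ∀ q : Katetov D M, q.dom ⊆ K → ∃ y ∈ orb q, Good (insert y K)) :
    ∃ φ : M → M, Isometry φ ∧ Set.EqOn φ id P ∧ ∀ x, ∃ K, Good K ∧ φ x ∈ K := by
  obtain ⟨φ, hφP, hφ⟩ := exists_forall_finset_eqOn
    (G := fun A φ => IsometricOn φ A ∧ Good (A.image φ)) (A := P) (φ := id)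
    ⟨.id, by rwa [Finset.image_id]⟩ (by
      rintro A φ ⟨hφ, hGood⟩ x hx
      have : Nonempty M := ⟨x⟩
      obtain ⟨q, hq, hqf⟩ := (Katetov.ofPoint hdist A x hx).exists_map hφ
      have hqA : q.dom = A.image φ := hq
      obtain ⟨y, hyq, hy⟩ := hstep _ hGood q hqA.subset
      have hyφ : ∀ a ∈ A, dist y (φ a) = dist x a := fun a ha =>
        (mem_orb_iff.1 hyq _ (hqA ▸ Finset.mem_image_of_mem φ ha)).trans (hqf a ha)
      have hupd := eqOn_update_of_dist_eq hyφ
      refine ⟨Function.update φ x y, hupd, ?_, ?_⟩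
      · simpa only [Finset.coe_insert] using hφ.update hyφ
      · rwa [Finset.image_insert, Function.update_self, Finset.image_congr hupd])
  refine ⟨φ, Isometry.of_dist_eq fun x y => ?_, hφP, fun x => ?_⟩
  · obtain ⟨A, φ', hA, ⟨hφ', -⟩, hφφ'⟩ := hφ {x, y}
    have hx : x ∈ A := hA (Finset.mem_insert_self x _)
    have hy : y ∈ A := hA (Finset.mem_insert_of_mem (Finset.mem_singleton_self y))
    rw [hφφ' hx, hφφ' hy, hφ' x hx y hy]
  · obtain ⟨A, φ', hA, ⟨-, hGood⟩, hφφ'⟩ := hφ {x}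
    have hx : x ∈ A := hA (Finset.mem_singleton_self x)
    exact ⟨A.image φ', hGood, (hφφ' hx).symm ▸ Finset.mem_image_of_mem φ' hx⟩

theorem IsCopy.exists_isometry [Countable M] (hdist : ∀ x y : M, dist x y ∈ D) {C : Set M}
    (hC : IsCopy D C) : ∃ φ : M → M, Isometry φ ∧ ∀ x, φ x ∈ C := by
  obtain ⟨φ, hφ, -, hφC⟩ := exists_isometry_of_forall_katetov hdist
    (Good := fun K => ↑K ⊆ C) (P := ∅) (by simp only [Finset.coe_empty, Set.empty_subset])
    fun K hK q hq => by
      obtain ⟨y, hyC, hyq⟩ := hC q fun x hx => hK (hq hx)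
      exact ⟨y, hyq, by simpa only [Finset.coe_insert] using Set.insert_subset hyC hK⟩
  refine ⟨φ, hφ, fun x => ?_⟩
  obtain ⟨K, hK, hx⟩ := hφC x
  exact hK hx

theorem IsCopy.range (hM : IsCopy D (Set.univ : Set M)) {φ : M → M} (hφ : Isometry φ) :
    IsCopy D (Set.range φ) := by
  intro t ht
  have : Nonempty M := (hM Katetov.empty (Set.subset_univ _)).to_type
  have hinv : ∀ x ∈ t.dom, φ (Function.invFun φ x) = x := fun x hx => Function.invFun_eq (ht hx)
  obtain ⟨u, hu, hut⟩ := t.exists_map (φ := Function.invFun φ) fun x hx y hy => by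
    rw [← hφ.dist_eq, hinv x hx, hinv y hy]
  obtain ⟨y, -, hy⟩ := hM u (Set.subset_univ _)
  refine ⟨φ y, Set.mem_range_self y, mem_orb_iff.2 fun x hx => ?_⟩
  calc dist (φ y) x = dist (φ y) (φ (Function.invFun φ x)) := by rw [hinv x hx]
    _ = dist y (Function.invFun φ x) := hφ.dist_eq _ _
    _ = u.f (Function.invFun φ x) := mem_orb_iff.1 hy _ (hu ▸ Finset.mem_image_of_mem _ hx)
    _ = t.f x := hut x hx

end Gluing

section Levels

variable {a r s : ℝ} {Γ C₀ C : Set M} {t : Katetov D M} {P : Finset M}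

/-- The state of the inductive construction of a copy inside `C₀`: the finite set `P` has been
chosen, its further points are to be chosen in `C`, and all points of `C ∩ orb t` that are at
distance less than `s` from `P` are in `Γ`. -/
structure IsGuarded (Γ C₀ : Set M) (t : Katetov D M) (s : ℝ) (P : Finset M) (C : Set M) :
    Prop where
  isCopy : IsCopy D C
  subset : C ⊆ C₀
  base_subset : ↑P ⊆ C
  dom_subset : t.dom ⊆ P
  mem_of_dist_lt : ∀ c ∈ C, c ∈ orb t → ∀ p ∈ P, dist c p < s → c ∈ Γ

theorem IsCondition.isGuarded (h : IsCondition C₀ t s) : IsGuarded Γ C₀ t s t.dom C₀ :=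
  ⟨h.isCopy, subset_rfl, h.dom_subset, subset_rfl, fun _ _ hct p hp hlt =>
    absurd (h.le p hp) (hct.2 p hp ▸ hlt).not_ge⟩

theorem IsGuarded.exists_insert (h : IsGuarded Γ C₀ t s P C) (hstep : IsBlockStep D a r s)
    (hD : D.Finite) (hdist : ∀ x y : M, dist x y ∈ D) (hdense : DenseBelow Γ C₀ t r s)
    (q : Katetov D M) (hq : q.dom ⊆ P) :
    ∃ y ∈ orb q, ∃ C', IsGuarded Γ C₀ t s (insert y P) C' := by
  obtain ⟨y, hyC, hyP, hyq⟩ := h.isCopy.exists_mem_orb_notMem hdist h.base_subset hstep.isLeast q hq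
  obtain ⟨C₁, y₁, href₁, hΓ₁⟩ := exists_refines_of_dist_eq hstep hD hdist hdense h.dom_subset
    h.subset ⟨h.isCopy, h.base_subset, hyC, hyP⟩
  obtain ⟨C₂, y₂, href₂, hΓ₂⟩ := exists_refines_of_dist_le hstep hD hdist h.dom_subset
    href₁.toIsPointedCopy hΓ₁
  have href := href₁.trans href₂
  refine ⟨y₂, mem_orb_iff.2 fun x hx => (href.eqOn (hq hx)).trans (hyq.2 x hx), C₂, href.isCopy,
    href.subset.trans h.subset, ?_, h.dom_subset.trans (Finset.subset_insert _ _), ?_⟩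
  · simpa only [Finset.coe_insert] using Set.insert_subset href.mem href.base_subset
  · intro c hc hct p hp hlt
    by_cases hnear : ∃ p ∈ P, dist c p < s
    · obtain ⟨p', hp', hlt'⟩ := hnear
      exact h.mem_of_dist_lt c (href.subset hc) hct p' hp' hlt'
    · push Not at hnear
      rcases Finset.mem_insert.1 hp with rfl | hpP
      · exact hΓ₂ c hc ⟨hct, hnear⟩ (hstep.le_of_lt _ (hdist c p) hlt)
      · exact absurd hlt (hnear p hpP).not_gt

theorem IsCondition.exists_subset_of_denseBelow [Countable M] (h : IsCondition C t s)
    (hstep : IsBlockStep D a r s) (hD : D.Finite) (hdist : ∀ x y : M, dist x y ∈ D)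
    (hM : IsCopy D (Set.univ : Set M)) (hdense : DenseBelow Γ C t r s) :
    ∃ C' ⊆ C, IsCondition C' t s ∧ C' ∩ orb t ⊆ Γ := by
  obtain ⟨φ, hφ, hφt, hφK⟩ := exists_isometry_of_forall_katetov hdist
    (Good := fun K => ∃ C', IsGuarded Γ C t s K C') ⟨C, h.isGuarded⟩
    fun K ⟨C', hC'⟩ q hq => hC'.exists_insert hstep hD hdist hdense q hq
  refine ⟨Set.range φ, ?_, ⟨hM.range hφ, fun x hx => ⟨x, hφt hx⟩, h.le⟩, ?_⟩
  · rintro _ ⟨x, rfl⟩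
    obtain ⟨K, ⟨C', hC'⟩, hx⟩ := hφK x
    exact hC'.subset (hC'.base_subset hx)
  · rintro _ ⟨⟨x, rfl⟩, hxt⟩
    obtain ⟨K, ⟨C', hC'⟩, hx⟩ := hφK x
    exact hC'.mem_of_dist_lt _ (hC'.base_subset hx) hxt _ hx
      (by rw [dist_self]; exact hstep.right_pos)

theorem IsCopy.isCopy_diff_or_exists_subset_compl (hdist : ∀ x y : M, dist x y ∈ D)
    (hC : IsCopy D C) (ht : ↑t.dom ⊆ C) (Γ : Set M) :
    IsCopy D (C \ (orb t \ Γ)) ∨ ∃ q ≥ t, ↑q.dom ⊆ C ∧ C ∩ orb q ⊆ Γᶜ := by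
  by_contra! ⟨hdiff, hmeets⟩
  refine hdiff fun q hq => ?_
  obtain ⟨y, hyC, hyq⟩ := hC q fun x hx => (hq hx).1
  by_cases hy : y ∈ orb t \ Γ
  · have hyP : y ∉ q.dom ∪ t.dom := by
      rw [Finset.mem_union, not_or]
      exact ⟨hyq.1, hy.1.1⟩
    have hP : ↑(q.dom ∪ t.dom) ⊆ C := by
      rw [Finset.coe_union]
      exact Set.union_subset (fun x hx => (hq hx).1) ht
    obtain ⟨z, ⟨hzC, hz⟩, hzΓ⟩ := Set.not_subset.1 <|
      hmeets (Katetov.ofPoint hdist _ y hyP) ⟨Finset.subset_union_right, hy.1.2⟩ hP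
    have hzq : z ∈ orb q := mem_orb_iff.2 fun x hx =>
      (Katetov.mem_orb_ofPoint.1 hz (Finset.mem_union_left _ hx)).trans (hyq.2 x hx)
    exact ⟨z, ⟨hzC, fun hzt => hzt.2 (not_not.1 hzΓ)⟩, hzq⟩
  · exact ⟨y, ⟨hyC, hy⟩, hyq⟩

theorem IsCondition.exists_monochromatic_of_isLeast (h : IsCondition C t a)
    (ha : IsLeast {d ∈ D | 0 < d} a) (hdist : ∀ x y : M, dist x y ∈ D) (Γ : Set M) :
    ∃ C' ⊆ C, ∃ t' ≥ t, IsCondition C' t' a ∧ (C' ∩ orb t' ⊆ Γ ∨ C' ∩ orb t' ⊆ Γᶜ) := by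
  rcases h.isCopy.isCopy_diff_or_exists_subset_compl hdist h.dom_subset Γ with hdiff | ⟨q, hq⟩
  · refine ⟨C \ (orb t \ Γ), Set.sdiff_subset, t, le_rfl, ⟨hdiff, fun x hx =>
      ⟨h.dom_subset hx, fun hxt => hxt.1.1 hx⟩, h.le⟩, .inl fun c hc => ?_⟩
    exact not_not.1 fun hcΓ => hc.1.2 ⟨hc.2, hcΓ⟩
  · exact ⟨C, subset_rfl, q, hq.1, ⟨h.isCopy, hq.2.1, fun x hx => ha.2 ⟨q.mem x hx, q.pos x hx⟩⟩,
      .inr hq.2.2⟩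

theorem IsCondition.exists_monochromatic_of_isBlockStep [Countable M]
    (hstep : IsBlockStep D a r s) (hD : D.Finite) (hdist : ∀ x y : M, dist x y ∈ D)
    (hM : IsCopy D (Set.univ : Set M))
    (ih : ∀ (C : Set M) (t : Katetov D M), IsCondition C t r →
      ∃ C' ⊆ C, ∃ t' ≥ t, IsCondition C' t' r ∧ (C' ∩ orb t' ⊆ Γ ∨ C' ∩ orb t' ⊆ Γᶜ))
    (h : IsCondition C t s) :
    ∃ C' ⊆ C, ∃ t' ≥ t, IsCondition C' t' s ∧ (C' ∩ orb t' ⊆ Γ ∨ C' ∩ orb t' ⊆ Γᶜ) := by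
  by_cases hdense : DenseBelow Γ C t r s
  · obtain ⟨C', hC'C, hC', hΓ⟩ := h.exists_subset_of_denseBelow hstep hD hdist hM hdense
    exact ⟨C', hC'C, t, le_rfl, hC', .inl hΓ⟩
  · simp only [DenseBelow] at hdense
    push Not at hdense
    obtain ⟨C₁, hC₁C, t₁, htt₁, h₁, hnot⟩ := hdense
    have hdense' : DenseBelow Γᶜ C₁ t₁ r s := fun C₂ hC₂ t₂ ht₂ h₂ => by
      obtain ⟨C₃, hC₃, t₃, ht₃, h₃, hΓ | hΓ⟩ :=
        ih C₂ t₂ ⟨h₂.isCopy, h₂.dom_subset, fun x hx => hstep.lt.le.trans (h₂.le x hx)⟩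
      · exact absurd hΓ (hnot C₃ (hC₃.trans hC₂) t₃ (ht₂.trans ht₃) h₃)
      · exact ⟨C₃, hC₃, t₃, ht₃, h₃, hΓ⟩
    obtain ⟨C', hC'C₁, hC', hΓ⟩ := h₁.exists_subset_of_denseBelow hstep hD hdist hM hdense'
    exact ⟨C', hC'C₁.trans hC₁C, t₁, htt₁, hC', .inr hΓ⟩

theorem IsCondition.exists_monochromatic [Countable M] (hD : D.Finite)
    (hdist : ∀ x y : M, dist x y ∈ D) (hM : IsCopy D (Set.univ : Set M)) {n : ℕ} {b : ℕ → ℝ}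
    (hb : IsLeast {d ∈ D | 0 < d} (b 0)) (hstep : ∀ i < n, IsBlockStep D (b 0) (b i) (b (i + 1)))
    (h : IsCondition C t (b n)) (Γ : Set M) :
    ∃ C' ⊆ C, ∃ t' ≥ t, IsCondition C' t' (b n) ∧
      (C' ∩ orb t' ⊆ Γ ∨ C' ∩ orb t' ⊆ Γᶜ) := by
  induction n generalizing C t with
  | zero => exact h.exists_monochromatic_of_isLeast hb hdist Γ
  | succ n ih =>
    exact exists_monochromatic_of_isBlockStep (hstep n n.lt_succ_self) hD hdist hM
      (fun _ _ => ih fun i hi => hstep i (hi.trans n.lt_succ_self)) h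

theorem IsCondition.isCopy_inter_orb (h : IsCondition C t s) (hs : ∀ d ∈ D, d ≤ s) :
    IsCopy D (C ∩ orb t) := by
  intro q hq
  obtain ⟨u, hqu, htu, hu⟩ := Katetov.exists_union (t := q) (u := t) fun x hx y hy => by
    have hxy := (hq hx).2.2 y hy
    have hle := (hs _ (q.mem x hx)).trans (h.le y hy)
    have hpos := q.pos x hx
    rw [hxy]
    exact ⟨abs_le.2 ⟨by linarith, by linarith⟩, by linarith⟩
  obtain ⟨y, hyC, hy⟩ := h.isCopy u (by
    rw [hu, Finset.coe_union]
    exact Set.union_subset (fun x hx => (hq hx).1) h.dom_subset)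
  exact ⟨y, ⟨hyC, orb_antitone htu hy⟩, orb_antitone hqu hy⟩

end Levels

end

section Urysohn

namespace Katetov

variable (t : Katetov D M)

/-- The distance on the domain of `t` extended by one point, `none`, at the distances prescribed
by `t`. -/
noncomputable def extensionDist : Option t.dom → Option t.dom → ℝ
  | none, none => 0
  | none, some p => t.f p
  | some p, none => t.f p
  | some p, some q => dist p q

/-- The one-point metric extension of the domain of `t`. -/
noncomputable abbrev extensionMetricSpace : MetricSpace (Option t.dom) where
  dist := t.extensionDist
  dist_self := by
    rintro (_ | p)
    · rfl
    · exact dist_self p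
  dist_comm := by
    rintro (_ | p) (_ | q)
    · rfl
    · rfl
    · rfl
    · exact dist_comm p q
  dist_triangle := by
    have hlip (p q : t.dom) : t.f p ≤ t.f q + dist p q := by
      have := (abs_le.1 (t.ineq1 p p.2 q q.2)).2
      rw [Subtype.dist_eq]
      linarith
    rintro (_ | p) (_ | q) (_ | x) <;> simp only [extensionDist]
    · rw [add_zero]
    · rw [zero_add]
    · exact add_nonneg (t.pos q q.2).le (t.pos q q.2).le
    · rw [dist_comm]
      exact hlip x q
    · rw [add_zero]
    · exact t.ineq2 p p.2 x x.2
    · rw [add_comm]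
      exact hlip p q
    · exact dist_triangle p q x
  eq_of_dist_eq_zero := by
    rintro (_ | p) (_ | q) h
    · rfl
    · exact absurd h (t.pos q q.2).ne'
    · exact absurd h (t.pos p p.2).ne'
    · exact congrArg some (dist_eq_zero.1 h)

theorem extensionDist_mem (h0 : 0 ∈ D) (hdist : ∀ x y : M, dist x y ∈ D) (x y : Option t.dom) :
    t.extensionDist x y ∈ D := by
  rcases x with _ | p <;> rcases y with _ | q
  · exact h0
  · exact t.mem q q.2
  · exact t.mem p p.2
  · exact hdist p q

end Katetov

theorem IsHomogeneous.exists_isometryEquiv (h : IsHomogeneous M) {P : Finset M} {g : P → M}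
    (hg : Isometry g) : ∃ e : M ≃ᵢ M, ∀ p : P, e (g p) = p := by
  have hinv (p : P) : Function.extend g (fun p => (p : M)) id (g p) = p :=
    hg.injective.extend_apply _ _ p
  obtain ⟨e, he⟩ := h (Finset.univ.map ⟨g, hg.injective⟩)
    (Function.extend g (fun p => (p : M)) id) (by
      simp only [Finset.forall_mem_map, Function.Embedding.coeFn_mk]
      intro p _ q _
      rw [hinv, hinv, hg.dist_eq, Subtype.dist_eq])
  refine ⟨e, fun p => (he (g p) ?_).trans (hinv p)⟩
  exact Finset.mem_map_of_mem ⟨g, hg.injective⟩ (Finset.mem_univ p)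

theorem IsUrysohn.isCopy_univ (hM : IsUrysohn D M) (h0 : 0 ∈ D) :
    IsCopy D (Set.univ : Set M) := by
  intro t _
  obtain ⟨-, hdist, hhom, hembed⟩ := hM
  let _ := t.extensionMetricSpace
  obtain ⟨g, hg⟩ := hembed (Option t.dom) inferInstance (t.extensionDist_mem h0 hdist)
  have hsome : Isometry fun p : t.dom => g (some p) := Isometry.of_dist_eq fun p q =>
    hg.dist_eq (some p) (some q)
  obtain ⟨e, he⟩ := hhom.exists_isometryEquiv hsome
  refine ⟨e (g none), Set.mem_univ _, mem_orb_iff.2 fun x hx => ?_⟩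
  calc dist (e (g none)) x = dist (e (g none)) (e (g (some ⟨x, hx⟩))) := by rw [he ⟨x, hx⟩]
    _ = dist (g none) (g (some ⟨x, hx⟩)) := e.dist_eq _ _
    _ = t.f x := hg.dist_eq none (some ⟨x, hx⟩)

end Urysohn

section Block

theorem IsBlock.exists_isBlockStep (hD : ∀ d ∈ D, 0 ≤ d) (hblock : IsBlock D (D \ {0})) :
    ∃ (n : ℕ) (b : ℕ → ℝ), IsLeast {d ∈ D | 0 < d} (b 0) ∧ (∀ d ∈ D, d ≤ b n) ∧
      ∀ i < n, IsBlockStep D (b 0) (b i) (b (i + 1)) := by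
  obtain ⟨n, b, hB, hbD, hb0, hlt, -, -, hgap⟩ := hblock
  have hmono : StrictMonoOn b (Set.Iic n) :=
    strictMonoOn_Iic_of_lt_succ hlt
  have hindex : ∀ d ∈ D, 0 < d → ∃ j ≤ n, d = b j := fun d hd hpos => by
    have hdB : d ∈ D \ {0} := ⟨hd, hpos.ne'⟩
    rwa [hB] at hdB
  have hle : ∀ i j, i ≤ j → j ≤ n → b i ≤ b j := fun i j hij hj =>
    hmono.monotoneOn (hij.trans hj) hj hij
  have hpos : ∀ i ≤ n, 0 < b i := fun i hi => hb0.trans_le (hle 0 i i.zero_le hi)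
  have hleast : IsLeast {d ∈ D | 0 < d} (b 0) := by
    refine ⟨⟨hbD 0 n.zero_le, hb0⟩, fun d ⟨hd, hd0⟩ => ?_⟩
    obtain ⟨j, hj, rfl⟩ := hindex d hd hd0
    exact hle 0 j j.zero_le hj
  refine ⟨n, b, hleast, fun d hd => ?_, fun i hi => ⟨hleast, hbD i hi.le, hbD (i + 1) hi,
    hpos i hi.le, hlt i hi, fun d hd hdi => ?_, hgap i hi⟩⟩
  · rcases (hD d hd).eq_or_lt with rfl | hd0
    · exact (hpos n le_rfl).le
    · obtain ⟨j, hj, rfl⟩ := hindex d hd hd0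
      exact hle j n hj le_rfl
  · rcases (hD d hd).eq_or_lt with rfl | hd0
    · exact (hpos i hi.le).le
    · obtain ⟨j, hj, rfl⟩ := hindex d hd hd0
      exact hle j i (Nat.lt_succ_iff.1 ((hmono.lt_iff_lt hj hi).1 hdi)) hi.le

end Block

theorem statement17 (D : Set ℝ) (hD : IsUniversalDist D)
    (hblock : IsBlock D (D \ {0})) (M : Type) [MetricSpace M]
    (hM : IsUrysohn D M) (χ : M → Bool) :
    ∃ (i : Bool) (f : M → M), Isometry f ∧ ∀ x : M, χ (f x) = i := by
  have : Countable M := hM.1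
  have hdist : ∀ x y : M, dist x y ∈ D := hM.2.1
  have hcopy : IsCopy D (Set.univ : Set M) := hM.isCopy_univ hD.2.1
  obtain ⟨n, b, hb, hmax, hstep⟩ := hblock.exists_isBlockStep hD.2.2.1
  have hempty : IsCondition Set.univ (Katetov.empty : Katetov D M) (b n) :=
    ⟨hcopy, Set.subset_univ _, fun x hx => absurd hx (Finset.notMem_empty x)⟩
  obtain ⟨C, -, t, -, hC, hχ⟩ :=
    hempty.exists_monochromatic hD.1 hdist hcopy hb hstep {x | χ x = true}
  obtain ⟨f, hf, hfC⟩ := (hC.isCopy_inter_orb hmax).exists_isometry hdist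
  rcases hχ with hχ | hχ
  · exact ⟨true, f, hf, fun x => hχ (hfC x)⟩
  · exact ⟨false, f, hf, fun x => Bool.eq_false_iff.2 (hχ (hfC x))⟩

end Sauer
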